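/- The subgroup ⟨σ, τ, λ₂₀⟩ of GL(3,ℂ) is the internal direct product of the four subgroups S(2,1), ⟨diag(1, 1, i)⟩, ⟨diag(ζ₅, ζ₅, 1)⟩ and ⟨diag(1, 1, ζ₅)⟩; in particular it is isomorphic to SL(2,5) × ℤ/4 × ℤ/5 × ℤ/5 and has order 12000. -/

import Mathlib

noncomputable section
open Matrix

def zeta5 : ℂ := Complex.exp (2 * Real.pi * Complex.I / 5)

def sqrt5 : ℂ := zeta5 - zeta5 ^ 2 - zeta5 ^ 3 + zeta5 ^ 4

def alpha : Matrix (Fin 2) (Fin 2) ℂ := -(Matrix.of ![![zeta5 ^ 3, 0], ![0, zeta5 ^ 2]])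
def beta : Matrix (Fin 2) (Fin 2) ℂ := Matrix.of ![![0, 1], ![-1, 0]]
def gamma : Matrix (Fin 2) (Fin 2) ℂ :=
  (zeta5 ^ 2 - zeta5 ^ 3)⁻¹ •
    Matrix.of ![![zeta5 + zeta5⁻¹, 1], ![1, -(zeta5 + zeta5⁻¹)]]

/-- The block-diagonal embedding of a `2 × 2` matrix into `GL(3)`, with last diagonal entry 1. -/
def emb (A : Matrix (Fin 2) (Fin 2) ℂ) : Matrix (Fin 3) (Fin 3) ℂ :=
  Matrix.of ![![A 0 0, A 0 1, 0], ![A 1 0, A 1 1, 0], ![0, 0, 1]]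

def alpha' : Matrix (Fin 3) (Fin 3) ℂ := emb alpha
def beta' : Matrix (Fin 3) (Fin 3) ℂ := emb beta
def gamma' : Matrix (Fin 3) (Fin 3) ℂ := emb gamma

def sigma : Matrix (Fin 3) (Fin 3) ℂ :=
  Matrix.of ![![(zeta5 - zeta5 ^ 4) / sqrt5, (zeta5 ^ 3 - zeta5 ^ 2) / sqrt5, 0],
    ![(zeta5 ^ 3 - zeta5 ^ 2) / sqrt5, -((zeta5 - zeta5 ^ 4) / sqrt5), 0],
    ![0, 0, 1]]

def tau : Matrix (Fin 3) (Fin 3) ℂ := Matrix.diagonal ![zeta5, 1, 1]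

def rho : Matrix (Fin 3) (Fin 3) ℂ := Matrix.diagonal ![zeta5 ^ 3, zeta5 ^ 2, 1]

/-- The subgroup of `GL(3, ℂ)` generated by the invertible matrices in `S`. -/
def gen3 (S : Set (Matrix (Fin 3) (Fin 3) ℂ)) : Subgroup (GL (Fin 3) ℂ) :=
  Subgroup.closure {g : GL (Fin 3) ℂ | (g : Matrix (Fin 3) (Fin 3) ℂ) ∈ S}

/-- `S(2,1) = ⟨α', β', γ'⟩`. -/
def S21 : Subgroup (GL (Fin 3) ℂ) := gen3 {alpha', beta', gamma'}

abbrev SL25 := Matrix.SpecialLinearGroup (Fin 2) (ZMod 5)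

def lambda20 : Matrix (Fin 3) (Fin 3) ℂ :=
  Matrix.diagonal ![1, 1, Complex.exp (2 * Real.pi * Complex.I / 20)]

/-- `⟨σ, τ, λ₂₀⟩`. -/
def Gt20 : Subgroup (GL (Fin 3) ℂ) := gen3 {sigma, tau, lambda20}

/-- The cyclic subgroup generated by `diag(1, 1, i)`. -/
def Ci : Subgroup (GL (Fin 3) ℂ) := gen3 {Matrix.diagonal ![1, 1, Complex.I]}

/-- The cyclic subgroup generated by `diag(ζ₅, ζ₅, 1)`. -/
def Dz : Subgroup (GL (Fin 3) ℂ) := gen3 {Matrix.diagonal ![zeta5, zeta5, 1]}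

/-- The cyclic subgroup generated by `diag(1, 1, ζ₅)`. -/
def Lz : Subgroup (GL (Fin 3) ℂ) := gen3 {Matrix.diagonal ![1, 1, zeta5]}

/-! ### A computable integral model of `ℤ[ζ₅]` -/

abbrev Q4 := ℤ × ℤ × ℤ × ℤ

def qmul (a b : Q4) : Q4 :=
  (a.1 * b.1 + (a.2.2.1 * b.2.2.2 + a.2.2.2 * b.2.2.1)
      - (a.2.1 * b.2.2.2 + a.2.2.1 * b.2.2.1 + a.2.2.2 * b.2.1),
   a.1 * b.2.1 + a.2.1 * b.1 + a.2.2.2 * b.2.2.2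
      - (a.2.1 * b.2.2.2 + a.2.2.1 * b.2.2.1 + a.2.2.2 * b.2.1),
   a.1 * b.2.2.1 + a.2.1 * b.2.1 + a.2.2.1 * b.1
      - (a.2.1 * b.2.2.2 + a.2.2.1 * b.2.2.1 + a.2.2.2 * b.2.1),
   a.1 * b.2.2.2 + a.2.1 * b.2.2.1 + a.2.2.1 * b.2.1 + a.2.2.2 * b.1
      - (a.2.1 * b.2.2.2 + a.2.2.1 * b.2.2.1 + a.2.2.2 * b.2.1))

def qadd (a b : Q4) : Q4 := (a.1 + b.1, a.2.1 + b.2.1, a.2.2.1 + b.2.2.1, a.2.2.2 + b.2.2.2)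

def qsm (n : ℤ) (b : Q4) : Q4 := (n * b.1, n * b.2.1, n * b.2.2.1, n * b.2.2.2)

def zp (n : ZMod 5) : Q4 :=
  if n = 0 then (1, 0, 0, 0) else if n = 1 then (0, 1, 0, 0) else if n = 2 then (0, 0, 1, 0)
  else if n = 3 then (0, 0, 0, 1) else (-1, -1, -1, -1)

def leg (n : ZMod 5) : ℤ := if n = 1 ∨ n = 4 then 1 else -1

/-- `√5` in the model. -/
def qs5 : Q4 := (-1, 0, -2, -2)

/-- five times the matrix entries of the odd part of the Weil representation of `SL(2,5)` -/
def ent (a b c d x y : ZMod 5) : Q4 :=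
  if c = 0 then
    if a * x = y then qsm (5 * leg a) (zp (2 * a * b * x * x))
    else if a * x = -y then qsm (-5 * leg a) (zp (2 * a * b * x * x))
    else (0, 0, 0, 0)
  else qsm (- leg c) (qmul qs5
    (qadd (zp (2 * (c * c * c) * (a * x * x - 2 * x * y + d * y * y)))
      (qsm (-1) (zp (2 * (c * c * c) * (a * x * x + 2 * x * y + d * y * y))))))

def xv (i : Fin 2) : ZMod 5 := if i = 0 then 1 else 3

theorem ent_T : ∀ a b c d : ZMod 5, a * d - b * c = 1 → ∀ i j : Fin 2,
    qadd (qmul (ent a b c d (xv i) 1) (ent 1 1 0 1 1 (xv j)))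
      (qmul (ent a b c d (xv i) 3) (ent 1 1 0 1 3 (xv j)))
      = qsm 5 (ent a (a + b) c (c + d) (xv i) (xv j)) := by
  decide +kernel

theorem ent_W : ∀ a b c d : ZMod 5, a * d - b * c = 1 → ∀ i j : Fin 2,
    qadd (qmul (ent a b c d (xv i) 1) (ent 0 1 4 0 1 (xv j)))
      (qmul (ent a b c d (xv i) 3) (ent 0 1 4 0 3 (xv j)))
      = qsm 5 (ent (-b) a (-d) c (xv i) (xv j)) := by
  decide +kernel

theorem ent_inj : ∀ a b c d : ZMod 5, a * d - b * c = 1 → ∀ n : ZMod 5,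
    (∀ i j : Fin 2, qmul (zp n) (ent a b c d (xv i) (xv j)) =
      if i = j then (5, 0, 0, 0) else (0, 0, 0, 0)) →
    a = 1 ∧ b = 0 ∧ c = 0 ∧ d = 1 ∧ n = 0 := by
  decide +kernel

/-! ### Evaluation in `ℂ` -/

theorem z_prim : IsPrimitiveRoot zeta5 5 := by
  have := Complex.isPrimitiveRoot_exp 5 (by norm_num)
  simpa [zeta5] using this

theorem z5 : zeta5 ^ 5 = 1 := z_prim.pow_eq_one

theorem z4 : zeta5 ^ 4 = -1 - zeta5 - zeta5 ^ 2 - zeta5 ^ 3 := by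
  have h := z_prim.geom_sum_eq_zero (by norm_num)
  simp [Finset.sum_range_succ] at h
  linear_combination h

def ev (a : Q4) : ℂ := a.1 + a.2.1 * zeta5 + a.2.2.1 * zeta5 ^ 2 + a.2.2.2 * zeta5 ^ 3

theorem ev_mul (a b : Q4) : ev (qmul a b) = ev a * ev b := by
  obtain ⟨a0, a1, a2, a3⟩ := a
  obtain ⟨b0, b1, b2, b3⟩ := b
  simp only [ev, qmul]
  push_cast
  linear_combination (- (a1 * b3 + a2 * b2 + a3 * b1 : ℂ)) * z4
    - ((a2 * b3 + a3 * b2 : ℂ) + a3 * b3 * zeta5) * z5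

theorem ev_add (a b : Q4) : ev (qadd a b) = ev a + ev b := by
  simp only [ev, qadd]; push_cast; ring

theorem ev_sm (n : ℤ) (b : Q4) : ev (qsm n b) = n * ev b := by
  simp only [ev, qsm]; push_cast; ring

theorem ev_zp (n : ZMod 5) : ev (zp n) = zeta5 ^ n.val := by
  have h : ∀ n : ZMod 5, n = 0 ∨ n = 1 ∨ n = 2 ∨ n = 3 ∨ n = 4 := by decide
  rcases h n with rfl | rfl | rfl | rfl | rfl
  · have : zp 0 = (1, 0, 0, 0) := by decide
    simp [this, ev]
  · have : zp 1 = (0, 1, 0, 0) := by decide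
    have h2 : (1 : ZMod 5).val = 1 := by decide
    simp [this, ev, h2]
  · have : zp 2 = (0, 0, 1, 0) := by decide
    have h2 : (2 : ZMod 5).val = 2 := by decide
    simp [this, ev, h2]
  · have : zp 3 = (0, 0, 0, 1) := by decide
    have h2 : (3 : ZMod 5).val = 3 := by decide
    simp [this, ev, h2]
  · have : zp 4 = (-1, -1, -1, -1) := by decide
    have h2 : (4 : ZMod 5).val = 4 := by decide
    simp [this, ev, h2, z4]; ring

theorem ev_inj {a b : Q4} (h : ev a = ev b) : a = b := by
  obtain ⟨a0, a1, a2, a3⟩ := a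
  obtain ⟨b0, b1, b2, b3⟩ := b
  open Polynomial in
  let p : ℤ[X] := C (a0 - b0) + C (a1 - b1) * X + C (a2 - b2) * X ^ 2 + C (a3 - b3) * X ^ 3
  have hp : Polynomial.aeval zeta5 p = 0 := by
    simp only [ev] at h
    simp [p]
    linear_combination h
  have hint : IsIntegral ℤ zeta5 := z_prim.isIntegral (by norm_num)
  have hd := minpoly.isIntegrallyClosed_dvd hint hp
  rw [← Polynomial.cyclotomic_eq_minpoly z_prim (by norm_num)] at hd
  have hp0 : p = 0 := by
    by_contra hne
    have h1 := Polynomial.natDegree_le_of_dvd hd hne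
    rw [Polynomial.natDegree_cyclotomic] at h1
    have h2 : p.natDegree ≤ 3 := by simp only [p]; compute_degree
    have h3 : Nat.totient 5 = 4 := by decide
    omega
  have c0 := congrArg (fun q => Polynomial.coeff q 0) hp0
  have c1 := congrArg (fun q => Polynomial.coeff q 1) hp0
  have c2 := congrArg (fun q => Polynomial.coeff q 2) hp0
  have c3 := congrArg (fun q => Polynomial.coeff q 3) hp0
  simp only [p, Polynomial.coeff_add, Polynomial.coeff_C_mul, Polynomial.coeff_X,
    Polynomial.coeff_X_pow, Polynomial.coeff_C, Polynomial.coeff_zero] at c0 c1 c2 c3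
  norm_num at c0 c1 c2 c3
  simp only [Prod.mk.injEq]
  refine ⟨?_, ?_, ?_, ?_⟩ <;> omega

/-! ### The representation -/

def Tm : SL25 := ⟨!![1, 1; 0, 1], by decide⟩
def Wm : SL25 := ⟨!![0, 1; 4, 0], by decide⟩
def Um (x : ZMod 5) : SL25 := ⟨!![1, x; 0, 1], by simp [Matrix.det_fin_two]⟩

theorem sl_det (g : SL25) : g 0 0 * g 1 1 - g 0 1 * g 1 0 = 1 := by
  have := g.2
  rwa [Matrix.det_fin_two] at this

theorem sl_ext {g h : SL25} (h1 : g 0 0 = h 0 0) (h2 : g 0 1 = h 0 1) (h3 : g 1 0 = h 1 0)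
    (h4 : g 1 1 = h 1 1) : g = h := by
  ext i j
  fin_cases i <;> fin_cases j <;> assumption

theorem sl_mul (g h : SL25) (i j : Fin 2) : (g * h) i j = g i 0 * h 0 j + g i 1 * h 1 j := by
  simp [Matrix.SpecialLinearGroup.coe_mul, Matrix.mul_apply, Fin.sum_univ_two]

theorem Um_mem (K : Submonoid SL25) (hT : Tm ∈ K) (x : ZMod 5) : Um x ∈ K := by
  have h : ∀ n : ℕ, Um (n : ZMod 5) ∈ K := by
    intro n
    induction n with
    | zero =>
      have : Um ((0 : ℕ) : ZMod 5) = 1 := by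
        apply sl_ext <;> simp [Um]
      rw [this]; exact K.one_mem
    | succ n ih =>
      have : Um ((n + 1 : ℕ) : ZMod 5) = Um (n : ZMod 5) * Tm := by
        apply sl_ext <;> rw [sl_mul] <;> simp [Um, Tm, add_comm]
      rw [this]; exact K.mul_mem ih hT
  have := h x.val
  rwa [ZMod.natCast_zmod_val] at this

theorem bruhat_aux : ∀ a b c d : ZMod 5, a * d - b * c = 1 → c ≠ 0 →
    (a + 1) * (c * c * c) * c - 1 = a ∧
    (d + 1) * (c * c * c) * ((a + 1) * (c * c * c) * c - 1) - (a + 1) * (c * c * c) = b ∧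
    (d + 1) * (c * c * c) * c - 1 = d := by
  decide +kernel

theorem gen_aux (K : Submonoid SL25) (hT : Tm ∈ K) (hW : Wm ∈ K) (g : SL25) (hc : g 1 0 ≠ 0) :
    g ∈ K := by
  obtain ⟨h1, h2, h3⟩ := bruhat_aux _ _ _ _ (sl_det g) hc
  have h4 : (4 : ZMod 5) = -1 := by decide
  have : g = Um ((g 0 0 + 1) * (g 1 0 * g 1 0 * g 1 0)) * Wm * Um (g 1 0) * Wm *
      Um ((g 1 1 + 1) * (g 1 0 * g 1 0 * g 1 0)) := by
    apply sl_ext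
    · simp only [sl_mul]; simp [Um, Wm, h4]; linear_combination -h1
    · simp only [sl_mul]; simp [Um, Wm, h4]; linear_combination -h2
    · simp only [sl_mul]; simp [Um, Wm, h4]
    · simp only [sl_mul]; simp [Um, Wm, h4]; linear_combination -h3
  rw [this]
  exact K.mul_mem (K.mul_mem (K.mul_mem (K.mul_mem (Um_mem K hT _) hW) (Um_mem K hT _)) hW)
    (Um_mem K hT _)

theorem gen_top (K : Submonoid SL25) (hT : Tm ∈ K) (hW : Wm ∈ K) (g : SL25) : g ∈ K := by
  by_cases hc : g 1 0 = 0
  · have hW4 : Wm * Wm * Wm * Wm = 1 := by decide +kernel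
    have h : g = g * Wm * Wm * Wm * Wm := by
      rw [mul_assoc g, mul_assoc g, mul_assoc g, hW4, mul_one]
    rw [h]
    refine K.mul_mem (K.mul_mem (K.mul_mem (gen_aux K hT hW _ ?_) hW) hW) hW
    have hd := sl_det g
    rw [sl_mul]
    simp [Wm, hc] at hd ⊢
    have h4 : ∀ x : ZMod 5, x * 4 = 0 → x = 0 := by decide
    intro h0
    rw [h4 _ h0, mul_zero] at hd
    exact absurd hd (by decide)
  · exact gen_aux K hT hW g hc

def Rm (g : SL25) : Matrix (Fin 2) (Fin 2) ℂ :=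
  fun i j => ev (ent (g 0 0) (g 0 1) (g 1 0) (g 1 1) (xv i) (xv j)) / 5

theorem Rm_T (g : SL25) : Rm (g * Tm) = Rm g * Rm Tm := by
  ext i j
  have h := congrArg ev (ent_T _ _ _ _ (sl_det g) i j)
  simp only [ev_add, ev_mul, ev_sm] at h
  have e1 : (g * Tm) 0 0 = g 0 0 := by rw [sl_mul]; simp [Tm]
  have e2 : (g * Tm) 0 1 = g 0 0 + g 0 1 := by rw [sl_mul]; simp [Tm]
  have e3 : (g * Tm) 1 0 = g 1 0 := by rw [sl_mul]; simp [Tm]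
  have e4 : (g * Tm) 1 1 = g 1 0 + g 1 1 := by rw [sl_mul]; simp [Tm]
  have t1 : Tm 0 0 = 1 := rfl
  have t2 : Tm 0 1 = 1 := rfl
  have t3 : Tm 1 0 = 0 := rfl
  have t4 : Tm 1 1 = 1 := rfl
  have x0 : xv 0 = 1 := rfl
  have x1 : xv 1 = 3 := rfl
  simp only [Rm, Matrix.mul_apply, Fin.sum_univ_two, e1, e2, e3, e4, t1, t2, t3, t4, x0, x1]
  push_cast at h
  linear_combination -h / 25

theorem Rm_W (g : SL25) : Rm (g * Wm) = Rm g * Rm Wm := by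
  ext i j
  have h := congrArg ev (ent_W _ _ _ _ (sl_det g) i j)
  simp only [ev_add, ev_mul, ev_sm] at h
  have h4 : (4 : ZMod 5) = -1 := by decide
  have e1 : (g * Wm) 0 0 = - g 0 1 := by rw [sl_mul]; simp [Wm, h4]
  have e2 : (g * Wm) 0 1 = g 0 0 := by rw [sl_mul]; simp [Wm]
  have e3 : (g * Wm) 1 0 = - g 1 1 := by rw [sl_mul]; simp [Wm, h4]
  have e4 : (g * Wm) 1 1 = g 1 0 := by rw [sl_mul]; simp [Wm]
  have t1 : Wm 0 0 = 0 := rfl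
  have t2 : Wm 0 1 = 1 := rfl
  have t3 : Wm 1 0 = 4 := rfl
  have t4 : Wm 1 1 = 0 := rfl
  have x0 : xv 0 = 1 := rfl
  have x1 : xv 1 = 3 := rfl
  simp only [Rm, Matrix.mul_apply, Fin.sum_univ_two, e1, e2, e3, e4, t1, t2, t3, t4, x0, x1]
  push_cast at h
  linear_combination -h / 25

theorem ent_one : ∀ i j : Fin 2, ent 1 0 0 1 (xv i) (xv j) =
    if i = j then (5, 0, 0, 0) else (0, 0, 0, 0) := by decide +kernel

theorem Rm_one : Rm 1 = 1 := by
  ext i j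
  have h : Rm 1 i j = ev (ent 1 0 0 1 (xv i) (xv j)) / 5 := rfl
  rw [h, ent_one, Matrix.one_apply]
  split_ifs <;> simp [ev]

theorem Rm_mul (g h : SL25) : Rm (g * h) = Rm g * Rm h := by
  let K : Submonoid SL25 :=
    { carrier := {h | ∀ g, Rm (g * h) = Rm g * Rm h}
      one_mem' := by intro g; rw [Rm_one, mul_one, mul_one]
      mul_mem' := by
        intro a b ha hb g
        rw [← mul_assoc, hb, ha, hb, mul_assoc] }
  exact gen_top K Rm_T Rm_W h g

/-! ### The big homomorphism -/

abbrev PP := SL25 × Multiplicative (ZMod 4) × Multiplicative (ZMod 5) × Multiplicative (ZMod 5)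

theorem I4 : Complex.I ^ 4 = 1 := by simp

def chz (n : Multiplicative (ZMod 5)) : ℂ := AddChar.zmodChar 5 z5 n.toAdd
def chi (n : Multiplicative (ZMod 4)) : ℂ := AddChar.zmodChar 4 I4 n.toAdd

theorem chz_mul (a b : Multiplicative (ZMod 5)) : chz (a * b) = chz a * chz b :=
  AddChar.map_add_eq_mul _ _ _
theorem chi_mul (a b : Multiplicative (ZMod 4)) : chi (a * b) = chi a * chi b :=
  AddChar.map_add_eq_mul _ _ _
theorem chz_one : chz 1 = 1 := AddChar.map_zero_eq_one _
theorem chi_one : chi 1 = 1 := AddChar.map_zero_eq_one _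
theorem chz_apply (a : Multiplicative (ZMod 5)) : chz a = zeta5 ^ a.toAdd.val :=
  AddChar.zmodChar_apply _ _
theorem chi_apply (a : Multiplicative (ZMod 4)) : chi a = Complex.I ^ a.toAdd.val :=
  AddChar.zmodChar_apply _ _

def bd (A : Matrix (Fin 2) (Fin 2) ℂ) (z w : ℂ) : Matrix (Fin 3) (Fin 3) ℂ :=
  Matrix.of ![![z * A 0 0, z * A 0 1, 0], ![z * A 1 0, z * A 1 1, 0], ![0, 0, w]]

theorem bd_mul (A B : Matrix (Fin 2) (Fin 2) ℂ) (z w z' w' : ℂ) :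
    bd (A * B) (z * z') (w * w') = bd A z w * bd B z' w' := by
  ext i j
  fin_cases i <;> fin_cases j <;>
    simp [bd, Matrix.mul_apply, Fin.sum_univ_two, Fin.sum_univ_three] <;> ring

theorem bd_one : bd 1 1 1 = 1 := by
  ext i j
  fin_cases i <;> fin_cases j <;> simp [bd]

def Phm : PP →* Matrix (Fin 3) (Fin 3) ℂ where
  toFun p := bd (Rm p.1) (chz p.2.2.1) (chi p.2.1 * chz p.2.2.2)
  map_one' := by
    simp only [Prod.fst_one, Prod.snd_one, Rm_one, chz_one, chi_one, mul_one, bd_one]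
  map_mul' p q := by
    simp only [Prod.fst_mul, Prod.snd_mul, Rm_mul, chz_mul, chi_mul]
    rw [← bd_mul]
    congr 1
    ring

def Phi : PP →* GL (Fin 3) ℂ := Phm.toHomUnits

theorem Phi_coe (p : PP) : (Phi p : Matrix (Fin 3) (Fin 3) ℂ) =
    bd (Rm p.1) (chz p.2.2.1) (chi p.2.1 * chz p.2.2.2) := rfl

theorem chz_inj {n : Multiplicative (ZMod 5)} (h : chz n = 1) : n = 1 := by
  rw [chz_apply, z_prim.pow_eq_one_iff_dvd] at h
  have h2 := ZMod.val_lt n.toAdd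
  have h3 : n.toAdd.val = 0 := by omega
  rw [ZMod.val_eq_zero] at h3
  exact h3

theorem I_prim : IsPrimitiveRoot Complex.I 4 := by
  have := Complex.isPrimitiveRoot_exp 4 (by norm_num)
  have h2 : Complex.exp (2 * Real.pi * Complex.I / (4 : ℕ)) = Complex.I := by
    rw [show 2 * (Real.pi : ℂ) * Complex.I / (4 : ℕ) = Real.pi / 2 * Complex.I by push_cast; ring,
      Complex.exp_pi_div_two_mul_I]
  rwa [h2] at this

theorem chi_inj {n : Multiplicative (ZMod 4)} (h : chi n = 1) : n = 1 := by
  rw [chi_apply, I_prim.pow_eq_one_iff_dvd] at h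
  have h2 := ZMod.val_lt n.toAdd
  have h3 : n.toAdd.val = 0 := by omega
  rw [ZMod.val_eq_zero] at h3
  exact h3

theorem Phi_inj : Function.Injective Phi := by
  rw [injective_iff_map_eq_one]
  rintro ⟨g, i, j, k⟩ h
  have h' : bd (Rm g) (chz j) (chi i * chz k) = 1 := by
    rw [← Phi_coe ⟨g, i, j, k⟩, h]; rfl
  have hw : chi i * chz k = 1 := by
    have := congrFun (congrFun h' 2) 2
    simpa [bd] using this
  have hz5 : chz k ^ 5 = 1 := by rw [chz_apply, ← pow_mul, mul_comm, pow_mul, z5, one_pow]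
  have hi4 : chi i ^ 4 = 1 := by rw [chi_apply, ← pow_mul, mul_comm, pow_mul, I4, one_pow]
  have hi5 : chi i ^ 5 = 1 := by
    have := congrArg (· ^ 5) hw
    simpa [mul_pow, hz5] using this
  have hi : chi i = 1 := by
    rw [pow_succ, hi4, one_mul] at hi5; exact hi5
  have hk : chz k = 1 := by rw [hi, one_mul] at hw; exact hw
  have hij : ∀ i' j' : Fin 2, qmul (zp j.toAdd)
      (ent (g 0 0) (g 0 1) (g 1 0) (g 1 1) (xv i') (xv j')) =
      if i' = j' then (5, 0, 0, 0) else (0, 0, 0, 0) := by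
    intro i' j'
    apply ev_inj
    rw [ev_mul, ev_zp, ← chz_apply]
    have e : ∀ i' j' : Fin 2, chz j * Rm g i' j' = if i' = j' then 1 else 0 := by
      intro i' j'
      have h00 := congrFun (congrFun h' 0) 0
      have h01 := congrFun (congrFun h' 0) 1
      have h10 := congrFun (congrFun h' 1) 0
      have h11 := congrFun (congrFun h' 1) 1
      simp [bd] at h00 h01 h10 h11
      fin_cases i' <;> fin_cases j' <;> simp [h00, h11] <;> assumption
    have e' := e i' j'
    simp only [Rm] at e'
    split_ifs at e' ⊢ with hh
    · simp [ev] at e' ⊢; linear_combination 5 * e'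
    · simp only [ev] at e' ⊢; push_cast; linear_combination 5 * e'
  obtain ⟨h1, h2, h3, h4, h5⟩ := ent_inj _ _ _ _ (sl_det g) _ hij
  have hg : g = 1 := by
    apply sl_ext
    · exact h1
    · exact h2
    · exact h3
    · exact h4
  have hj : j = 1 := h5
  rw [hg, hj, chi_inj hi, chz_inj hk]
  rfl

/-! ### Generators -/

def Am : SL25 := ⟨!![4, 1; 0, 4], by decide⟩
def Bm : SL25 := ⟨!![2, 0; 0, 3], by decide⟩
def Cm : SL25 := ⟨!![0, 2; 2, 0], by decide⟩
def tm : SL25 := ⟨!![1, 4; 0, 1], by decide⟩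

theorem Rm_eq (g : SL25) (q : Fin 2 → Fin 2 → Q4)
    (h : ∀ i j, ent (g 0 0) (g 0 1) (g 1 0) (g 1 1) (xv i) (xv j) = q i j) :
    Rm g = fun i j => ev (q i j) / 5 := by
  ext i j
  simp only [Rm, h]

theorem gam_inv : (zeta5 ^ 2 - zeta5 ^ 3)⁻¹ = (-1 - 2 * zeta5 - 3 * zeta5 ^ 2 + zeta5 ^ 3) / 5 := by
  apply inv_eq_of_mul_eq_one_right
  linear_combination -z4 / 5 + (4 - zeta5) * z5 / 5

theorem s5_sq : sqrt5 * sqrt5 = 5 := by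
  simp only [sqrt5]
  have h5 := z5
  have h4 := z4
  have h6 : zeta5 ^ 6 = zeta5 := by linear_combination zeta5 * z5
  have h7 : zeta5 ^ 7 = zeta5 ^ 2 := by linear_combination zeta5 ^ 2 * z5
  have h8 : zeta5 ^ 8 = zeta5 ^ 3 := by linear_combination zeta5 ^ 3 * z5
  ring_nf
  rw [h5, h6, h7, h8, h4]
  ring

theorem s5_ne : sqrt5 ≠ 0 := by
  intro h
  have := s5_sq
  rw [h] at this
  norm_num at this

theorem Rm_A : Rm Am = alpha := by
  rw [Rm_eq Am ![![(0, 0, 0, -5), (0, 0, 0, 0)], ![(0, 0, 0, 0), (0, 0, -5, 0)]]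
    (by decide +kernel)]
  ext i j
  fin_cases i <;> fin_cases j <;> simp [ev, alpha] <;> ring

theorem Rm_B : Rm Bm = beta := by
  rw [Rm_eq Bm ![![(0, 0, 0, 0), (5, 0, 0, 0)], ![(-5, 0, 0, 0), (0, 0, 0, 0)]]
    (by decide +kernel)]
  ext i j
  fin_cases i <;> fin_cases j <;> simp [ev, beta]

theorem z_inv : zeta5⁻¹ = zeta5 ^ 4 := by
  apply inv_eq_of_mul_eq_one_left
  linear_combination z5

theorem Rm_C : Rm Cm = gamma := by
  rw [Rm_eq Cm ![![(-2, -4, -1, -3), (-1, -2, -3, 1)], ![(-1, -2, -3, 1), (2, 4, 1, 3)]]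
    (by decide +kernel)]
  have h6 : zeta5 ^ 6 = zeta5 := by linear_combination zeta5 * z5
  have h7 : zeta5 ^ 7 = zeta5 ^ 2 := by linear_combination zeta5 ^ 2 * z5
  ext i j
  fin_cases i <;> fin_cases j <;> simp [ev, gamma, gam_inv, z_inv] <;> ring_nf <;>
    (try simp only [z5, h6, h7, z4]) <;> ring

theorem bd_emb (A : Matrix (Fin 2) (Fin 2) ℂ) : bd A 1 1 = emb A := by
  ext i j
  fin_cases i <;> fin_cases j <;> simp [bd, emb]

def gA : PP := (Am, 1, 1, 1)
def gB : PP := (Bm, 1, 1, 1)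
def gC : PP := (Cm, 1, 1, 1)
def gs : PP := (Wm, 1, 1, 1)
def gt : PP := (tm, 1, Multiplicative.ofAdd 3, 1)
def gl : PP := (1, Multiplicative.ofAdd 1, 1, Multiplicative.ofAdd 4)
def gi : PP := (1, Multiplicative.ofAdd 1, 1, 1)
def gD : PP := (1, 1, Multiplicative.ofAdd 1, 1)
def gL : PP := (1, 1, 1, Multiplicative.ofAdd 1)

theorem P_A : (Phi gA : Matrix (Fin 3) (Fin 3) ℂ) = alpha' := by
  rw [Phi_coe]; simp only [gA, chz_one, chi_one, mul_one, Rm_A, bd_emb, alpha']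
theorem P_B : (Phi gB : Matrix (Fin 3) (Fin 3) ℂ) = beta' := by
  rw [Phi_coe]; simp only [gB, chz_one, chi_one, mul_one, Rm_B, bd_emb, beta']
theorem P_C : (Phi gC : Matrix (Fin 3) (Fin 3) ℂ) = gamma' := by
  rw [Phi_coe]; simp only [gC, chz_one, chi_one, mul_one, Rm_C, bd_emb, gamma']

theorem bd_diag (z w : ℂ) : bd 1 z w = Matrix.diagonal ![z, z, w] := by
  ext i j
  fin_cases i <;> fin_cases j <;> simp [bd]

theorem chz_1 : chz (Multiplicative.ofAdd 1) = zeta5 := by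
  rw [chz_apply, show (Multiplicative.ofAdd (1 : ZMod 5)).toAdd.val = 1 from rfl, pow_one]
theorem chz_3 : chz (Multiplicative.ofAdd 3) = zeta5 ^ 3 := by
  rw [chz_apply, show (Multiplicative.ofAdd (3 : ZMod 5)).toAdd.val = 3 from rfl]
theorem chz_4 : chz (Multiplicative.ofAdd 4) = zeta5 ^ 4 := by
  rw [chz_apply, show (Multiplicative.ofAdd (4 : ZMod 5)).toAdd.val = 4 from rfl]
theorem chi_1 : chi (Multiplicative.ofAdd 1) = Complex.I := by
  rw [chi_apply, show (Multiplicative.ofAdd (1 : ZMod 4)).toAdd.val = 1 from rfl, pow_one]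

theorem P_i : (Phi gi : Matrix (Fin 3) (Fin 3) ℂ) = Matrix.diagonal ![1, 1, Complex.I] := by
  rw [Phi_coe]; simp only [gi, chz_one, chi_1, mul_one, Rm_one, bd_diag]
theorem P_D : (Phi gD : Matrix (Fin 3) (Fin 3) ℂ) = Matrix.diagonal ![zeta5, zeta5, 1] := by
  rw [Phi_coe]; simp only [gD, chz_one, chz_1, chi_one, mul_one, Rm_one, bd_diag]
theorem P_L : (Phi gL : Matrix (Fin 3) (Fin 3) ℂ) = Matrix.diagonal ![1, 1, zeta5] := by
  rw [Phi_coe]; simp only [gL, chz_one, chz_1, chi_one, one_mul, Rm_one, bd_diag]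

theorem P_l : (Phi gl : Matrix (Fin 3) (Fin 3) ℂ) = lambda20 := by
  rw [Phi_coe]; simp only [gl, chz_one, chz_4, chi_1, Rm_one, bd_diag, lambda20]
  have : Complex.I * zeta5 ^ 4 = Complex.exp (2 * Real.pi * Complex.I / 20) := by
    have h : zeta5 * Complex.exp (2 * Real.pi * Complex.I / 20) = Complex.I := by
      rw [zeta5, ← Complex.exp_add,
        show 2 * (Real.pi : ℂ) * Complex.I / 5 + 2 * Real.pi * Complex.I / 20
          = Real.pi / 2 * Complex.I by ring, Complex.exp_pi_div_two_mul_I]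
    linear_combination Complex.exp (2 * Real.pi * Complex.I / 20) * z5 - zeta5 ^ 4 * h
  rw [this]

theorem P_s : (Phi gs : Matrix (Fin 3) (Fin 3) ℂ) = sigma := by
  rw [Phi_coe]; simp only [gs, chz_one, chi_one, mul_one]
  rw [Rm_eq Wm ![![(1, 2, 3, -1), (-2, -4, -1, -3)], ![(-2, -4, -1, -3), (-1, -2, -3, 1)]]
    (by decide +kernel)]
  have h6 : zeta5 ^ 6 = zeta5 := by linear_combination zeta5 * z5
  have h7 : zeta5 ^ 7 = zeta5 ^ 2 := by linear_combination zeta5 ^ 2 * z5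
  have h8 : zeta5 ^ 8 = zeta5 ^ 3 := by linear_combination zeta5 ^ 3 * z5
  have hs : ∀ x : ℂ, x / sqrt5 = x * sqrt5 / 5 := by
    intro x
    rw [← s5_sq]
    field_simp [s5_ne]
  ext i j
  fin_cases i <;> fin_cases j <;> simp [ev, bd, sigma, hs] <;> rw [sqrt5] <;> ring_nf <;>
    simp only [z5, h6, h7, h8, z4] <;> ring

theorem P_t : (Phi gt : Matrix (Fin 3) (Fin 3) ℂ) = tau := by
  rw [Phi_coe]; simp only [gt, chz_one, chi_one, mul_one, chz_3]
  rw [Rm_eq tm ![![(0, 0, 0, 5), (0, 0, 0, 0)], ![(0, 0, 0, 0), (0, 0, 5, 0)]]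
    (by decide +kernel)]
  ext i j
  fin_cases i <;> fin_cases j <;> simp [ev, bd, tau]
  · linear_combination zeta5 * z5
  · linear_combination z5

theorem gen3_map (S : Set (Matrix (Fin 3) (Fin 3) ℂ)) (X : Set PP)
    (h : (fun p => (Phi p : Matrix (Fin 3) (Fin 3) ℂ)) '' X = S) :
    gen3 S = (Subgroup.closure X).map Phi := by
  rw [gen3, MonoidHom.map_closure]
  congr 1
  ext g
  rw [← h]
  constructor
  · rintro ⟨p, hp, he⟩
    exact ⟨p, hp, Units.ext he⟩
  · rintro ⟨p, hp, rfl⟩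
    exact ⟨p, hp, rfl⟩

/-! ### Coordinate subgroups -/

def Q1 : Subgroup PP := Subgroup.prod ⊤ ⊥
def Q2 : Subgroup PP := Subgroup.prod ⊥ (Subgroup.prod ⊤ ⊥)
def Q3 : Subgroup PP := Subgroup.prod ⊥ (Subgroup.prod ⊥ (Subgroup.prod ⊤ ⊥))
def Q5 : Subgroup PP := Subgroup.prod ⊥ (Subgroup.prod ⊥ (Subgroup.prod ⊥ ⊤))

theorem mem_Q1 (p : PP) : p ∈ Q1 ↔ p.2.1 = 1 ∧ p.2.2.1 = 1 ∧ p.2.2.2 = 1 := by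
  simp [Q1, Subgroup.mem_prod, Prod.ext_iff]
theorem mem_Q2 (p : PP) : p ∈ Q2 ↔ p.1 = 1 ∧ p.2.2.1 = 1 ∧ p.2.2.2 = 1 := by
  simp [Q2, Subgroup.mem_prod, Prod.ext_iff]
theorem mem_Q3 (p : PP) : p ∈ Q3 ↔ p.1 = 1 ∧ p.2.1 = 1 ∧ p.2.2.2 = 1 := by
  simp [Q3, Subgroup.mem_prod, Prod.ext_iff]
theorem mem_Q5 (p : PP) : p ∈ Q5 ↔ p.1 = 1 ∧ p.2.1 = 1 ∧ p.2.2.1 = 1 := by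
  simp [Q5, Subgroup.mem_prod, Prod.ext_iff]

theorem Q1_le (K : Subgroup PP) (hT : ((Tm, 1, 1, 1) : PP) ∈ K)
    (hW : ((Wm, 1, 1, 1) : PP) ∈ K) : Q1 ≤ K := by
  intro p hp
  rw [mem_Q1] at hp
  obtain ⟨g, i, j, k⟩ := p
  obtain ⟨h1, h2, h3⟩ := hp
  simp only at h1 h2 h3
  subst h1 h2 h3
  exact gen_top (K.comap (MonoidHom.inl SL25
    (Multiplicative (ZMod 4) × Multiplicative (ZMod 5) × Multiplicative (ZMod 5)))).toSubmonoid hT hW g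

theorem pow_ofAdd (n : ℕ) [NeZero n] (i : Multiplicative (ZMod n)) :
    (Multiplicative.ofAdd (1 : ZMod n)) ^ i.toAdd.val = i := by
  rw [← ofAdd_nsmul]
  simp

theorem Q2_le (K : Subgroup PP) (h : gi ∈ K) : Q2 ≤ K := by
  intro p hp
  rw [mem_Q2] at hp
  have : p = gi ^ p.2.1.toAdd.val := by
    obtain ⟨g, i, j, k⟩ := p
    obtain ⟨h1, h2, h3⟩ := hp
    simp only at h1 h2 h3
    subst h1 h2 h3
    simp only [gi, Prod.pow_mk, one_pow, pow_ofAdd]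
  rw [this]; exact K.pow_mem h _

theorem Q3_le (K : Subgroup PP) (h : gD ∈ K) : Q3 ≤ K := by
  intro p hp
  rw [mem_Q3] at hp
  have : p = gD ^ p.2.2.1.toAdd.val := by
    obtain ⟨g, i, j, k⟩ := p
    obtain ⟨h1, h2, h3⟩ := hp
    simp only at h1 h2 h3
    subst h1 h2 h3
    simp only [gD, Prod.pow_mk, one_pow, pow_ofAdd]
  rw [this]; exact K.pow_mem h _

theorem Q5_le (K : Subgroup PP) (h : gL ∈ K) : Q5 ≤ K := by
  intro p hp
  rw [mem_Q5] at hp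
  have : p = gL ^ p.2.2.2.toAdd.val := by
    obtain ⟨g, i, j, k⟩ := p
    obtain ⟨h1, h2, h3⟩ := hp
    simp only at h1 h2 h3
    subst h1 h2 h3
    simp only [gL, Prod.pow_mk, one_pow, pow_ofAdd]
  rw [this]; exact K.pow_mem h _

theorem sup_top (K : Subgroup PP) (h1 : Q1 ≤ K) (h2 : Q2 ≤ K) (h3 : Q3 ≤ K) (h5 : Q5 ≤ K) :
    K = ⊤ := by
  rw [eq_top_iff]
  rintro ⟨g, i, j, k⟩ -
  have : ((g, i, j, k) : PP) = (g, 1, 1, 1) * (1, i, 1, 1) * (1, 1, j, 1) * (1, 1, 1, k) := by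
    simp
  rw [this]
  exact K.mul_mem (K.mul_mem (K.mul_mem (h1 (by simp [mem_Q1])) (h2 (by simp [mem_Q2])))
    (h3 (by simp [mem_Q3]))) (h5 (by simp [mem_Q5]))

theorem S21_eq : S21 = Q1.map Phi := by
  rw [S21, gen3_map _ {gA, gB, gC} (by simp [Set.image_insert_eq, P_A, P_B, P_C])]
  congr 1
  apply le_antisymm
  · rw [Subgroup.closure_le]
    rintro p (rfl | rfl | rfl) <;> exact (mem_Q1 _).2 ⟨rfl, rfl, rfl⟩
  · have hA : gA ∈ Subgroup.closure {gA, gB, gC} := Subgroup.subset_closure (by simp)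
    have hB : gB ∈ Subgroup.closure {gA, gB, gC} := Subgroup.subset_closure (by simp)
    have hC : gC ∈ Subgroup.closure {gA, gB, gC} := Subgroup.subset_closure (by simp)
    apply Q1_le
    · have : ((Tm, 1, 1, 1) : PP) = gB * gA * gB := by decide +kernel
      rw [this]; exact mul_mem (mul_mem hB hA) hB
    · have : ((Wm, 1, 1, 1) : PP) = gC * gB := by decide +kernel
      rw [this]; exact mul_mem hC hB

theorem Ci_eq : Ci = Q2.map Phi := by
  rw [Ci, gen3_map _ {gi} (by simp [P_i])]
  congr 1
  apply le_antisymm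
  · rw [Subgroup.closure_le]
    rintro p rfl
    exact (mem_Q2 _).2 ⟨rfl, rfl, rfl⟩
  · exact Q2_le _ (Subgroup.subset_closure (by simp))

theorem Dz_eq : Dz = Q3.map Phi := by
  rw [Dz, gen3_map _ {gD} (by simp [P_D])]
  congr 1
  apply le_antisymm
  · rw [Subgroup.closure_le]
    rintro p rfl
    exact (mem_Q3 _).2 ⟨rfl, rfl, rfl⟩
  · exact Q3_le _ (Subgroup.subset_closure (by simp))

theorem Lz_eq : Lz = Q5.map Phi := by
  rw [Lz, gen3_map _ {gL} (by simp [P_L])]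
  congr 1
  apply le_antisymm
  · rw [Subgroup.closure_le]
    rintro p rfl
    exact (mem_Q5 _).2 ⟨rfl, rfl, rfl⟩
  · exact Q5_le _ (Subgroup.subset_closure (by simp))

theorem Gt20_eq : Gt20 = (⊤ : Subgroup PP).map Phi := by
  rw [Gt20, gen3_map _ {gs, gt, gl} (by simp [Set.image_insert_eq, P_s, P_t, P_l])]
  congr 1
  have hs : gs ∈ Subgroup.closure {gs, gt, gl} := Subgroup.subset_closure (by simp)
  have ht : gt ∈ Subgroup.closure {gs, gt, gl} := Subgroup.subset_closure (by simp)
  have hl : gl ∈ Subgroup.closure {gs, gt, gl} := Subgroup.subset_closure (by simp)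
  have hD : gD ∈ Subgroup.closure {gs, gt, gl} := by
    have : gD = (gs * gt) ^ 12 := by decide +kernel
    rw [this]; exact pow_mem (mul_mem hs ht) _
  apply sup_top
  · apply Q1_le _ _ hs
    have : ((Tm, 1, 1, 1) : PP) = gt ^ 4 * gD ^ 3 := by decide +kernel
    rw [this]; exact mul_mem (pow_mem ht _) (pow_mem hD _)
  · apply Q2_le
    have : gi = gl ^ 5 := by decide +kernel
    rw [this]; exact pow_mem hl _
  · exact Q3_le _ hD
  · apply Q5_le
    have : gL = gl ^ 4 := by decide +kernel
    rw [this]; exact pow_mem hl _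

theorem comm_map {H K : Subgroup PP} (h : ∀ a ∈ H, ∀ b ∈ K, a * b = b * a) :
    ∀ a ∈ H.map Phi, ∀ b ∈ K.map Phi, a * b = b * a := by
  rintro _ ⟨a, ha, rfl⟩ _ ⟨b, hb, rfl⟩
  rw [← map_mul, h a ha b hb, map_mul]

theorem sl_card : Nat.card SL25 = 120 := by
  let e : SL25 ≃ {p : ZMod 5 × ZMod 5 × ZMod 5 × ZMod 5 // p.1 * p.2.2.2 - p.2.1 * p.2.2.1 = 1} :=
    { toFun := fun g => ⟨(g 0 0, g 0 1, g 1 0, g 1 1), sl_det g⟩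
      invFun := fun p => ⟨!![p.1.1, p.1.2.1; p.1.2.2.1, p.1.2.2.2], by
        rw [Matrix.det_fin_two_of]; exact p.2⟩
      left_inv := fun g => by apply sl_ext <;> rfl
      right_inv := fun p => rfl }
  rw [Nat.card_congr e, Nat.card_eq_fintype_card]
  decide +kernel

theorem stmt14 :
    (∀ a ∈ S21, ∀ b ∈ Ci, a * b = b * a) ∧
    (∀ a ∈ S21, ∀ b ∈ Dz, a * b = b * a) ∧
    (∀ a ∈ S21, ∀ b ∈ Lz, a * b = b * a) ∧
    (∀ a ∈ Ci, ∀ b ∈ Dz, a * b = b * a) ∧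
    (∀ a ∈ Ci, ∀ b ∈ Lz, a * b = b * a) ∧
    (∀ a ∈ Dz, ∀ b ∈ Lz, a * b = b * a) ∧
    S21 ⊓ Ci = ⊥ ∧
    (S21 ⊔ Ci) ⊓ Dz = ⊥ ∧
    (S21 ⊔ Ci ⊔ Dz) ⊓ Lz = ⊥ ∧
    S21 ⊔ Ci ⊔ Dz ⊔ Lz = Gt20 ∧
    Nonempty (Gt20 ≃*
      SL25 × Multiplicative (ZMod 4) × Multiplicative (ZMod 5) × Multiplicative (ZMod 5)) ∧
    Nat.card Gt20 = 12000 := by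
  have iso : Nonempty (Gt20 ≃* PP) := by
    rw [Gt20_eq]
    exact ⟨((Subgroup.equivMapOfInjective ⊤ Phi Phi_inj).symm).trans Subgroup.topEquiv⟩
  have hcard : Nat.card Gt20 = 12000 := by
    obtain ⟨e⟩ := iso
    rw [Nat.card_congr e.toEquiv, Nat.card_prod, Nat.card_prod, Nat.card_prod, sl_card]
    simp
  rw [S21_eq, Ci_eq, Dz_eq, Lz_eq] at *
  refine ⟨comm_map ?_, comm_map ?_, comm_map ?_, comm_map ?_, comm_map ?_, comm_map ?_,
    ?_, ?_, ?_, ?_, iso, hcard⟩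
  · rintro ⟨a, b, c, d⟩ h ⟨a', b', c', d'⟩ h'
    simp only [mem_Q1, mem_Q2] at h h'
    simp [h, h']
  · rintro ⟨a, b, c, d⟩ h ⟨a', b', c', d'⟩ h'
    simp only [mem_Q1, mem_Q3] at h h'
    simp [h, h']
  · rintro ⟨a, b, c, d⟩ h ⟨a', b', c', d'⟩ h'
    simp only [mem_Q1, mem_Q5] at h h'
    simp [h, h']
  · rintro ⟨a, b, c, d⟩ h ⟨a', b', c', d'⟩ h'
    simp only [mem_Q2, mem_Q3] at h h'
    simp [h, h']
  · rintro ⟨a, b, c, d⟩ h ⟨a', b', c', d'⟩ h'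
    simp only [mem_Q2, mem_Q5] at h h'
    simp [h, h']
  · rintro ⟨a, b, c, d⟩ h ⟨a', b', c', d'⟩ h'
    simp only [mem_Q3, mem_Q5] at h h'
    simp [h, h']
  · rw [← Subgroup.map_inf_eq _ _ _ Phi_inj, Subgroup.map_eq_bot_iff_of_injective _ Phi_inj,
      eq_bot_iff]
    rintro ⟨a, b, c, d⟩ ⟨h, h'⟩
    replace h := (mem_Q1 _).1 h
    replace h' := (mem_Q2 _).1 h'
    simp_all
  · rw [← Subgroup.map_sup, ← Subgroup.map_inf_eq _ _ _ Phi_inj,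
      Subgroup.map_eq_bot_iff_of_injective _ Phi_inj, eq_bot_iff]
    have hle : Q1 ⊔ Q2 ≤ Subgroup.prod ⊤ (Subgroup.prod ⊤ ⊥) := by
      refine sup_le ?_ ?_
      · intro p hp
        rw [mem_Q1] at hp
        simp [Subgroup.mem_prod, Prod.ext_iff, hp]
      · intro p hp
        rw [mem_Q2] at hp
        simp [Subgroup.mem_prod, Prod.ext_iff, hp]
    rintro ⟨a, b, c, d⟩ ⟨h, h'⟩
    have h := hle h
    replace h' := (mem_Q3 _).1 h'
    simp_all [Subgroup.mem_prod]
  · rw [← Subgroup.map_sup, ← Subgroup.map_sup, ← Subgroup.map_inf_eq _ _ _ Phi_inj,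
      Subgroup.map_eq_bot_iff_of_injective _ Phi_inj, eq_bot_iff]
    have hle : Q1 ⊔ Q2 ⊔ Q3 ≤ Subgroup.prod ⊤ (Subgroup.prod ⊤ (Subgroup.prod ⊤ ⊥)) := by
      refine sup_le (sup_le ?_ ?_) ?_
      · intro p hp
        rw [mem_Q1] at hp
        simp [Subgroup.mem_prod, hp]
      · intro p hp
        rw [mem_Q2] at hp
        simp [Subgroup.mem_prod, hp]
      · intro p hp
        rw [mem_Q3] at hp
        simp [Subgroup.mem_prod, hp]
    rintro ⟨a, b, c, d⟩ ⟨h, h'⟩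
    have h := hle h
    replace h' := (mem_Q5 _).1 h'
    simp_all [Subgroup.mem_prod]
  · rw [← Subgroup.map_sup, ← Subgroup.map_sup, ← Subgroup.map_sup, Gt20_eq]
    congr 1
    apply sup_top
    · exact le_sup_of_le_left (le_sup_of_le_left le_sup_left)
    · exact le_sup_of_le_left (le_sup_of_le_left le_sup_right)
    · exact le_sup_of_le_left le_sup_right
    · exact le_sup_right
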